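/- arXiv:1109.4817 — 2 statements merged into one kernel-verified Lean document; each statement's English description precedes it below -/
import Mathlib

section
/- Simulation of the λ-calculus in π, part 2: if Γ ⊢λ M : A in the simply typed λ-calculus, then ⟦M⟧πα : Γ ⊢π α:A, where ⟦M⟧πα = ⟦⟦M⟧α⟧ is the composition of the interpretation of λ into X with the encoding of X into π. -/
/-! # Shared development: types, X-calculus, π-calculus, encodings -/

/-- Simple (Curry) types over infinitely many basic types. -/
inductive Ty : Type
  | base : ℕ → Ty
  | arrow : Ty → Ty → Ty
  deriving DecidableEq

/-- Contexts are (partial) maps from names to types; `upd` is (compatible) extension. -/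
def upd {α : Type} [DecidableEq α] (Γ : α → Option Ty) (n : α) (A : Ty) : α → Option Ty :=
  fun m => if m = n then some A else Γ m

def emptyCtx {α : Type} : α → Option Ty := fun _ => none

/-! ## The X-calculus: nets
Sockets and plugs are each drawn from a copy of ℕ (the two namespaces are kept apart
by position: sockets are always socket arguments, plugs are plug arguments). -/

inductive Net : Type
  | cap : ℕ → ℕ → Net                      -- ⟨x·α⟩ : socket x, plug α
  | exp : ℕ → Net → ℕ → ℕ → Net            -- (x̂ P α̂)·β : binds socket x, plug α in P
  | imp : Net → ℕ → ℕ → ℕ → Net → Net      -- P α̂ [y] x̂ Q : binds α in P, x in Q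
  | cut : Net → ℕ → ℕ → Net → Net          -- P α̂ † x̂ Q
  | cutL : Net → ℕ → ℕ → Net → Net         -- P α̂ †← x̂ Q
  | cutR : Net → ℕ → ℕ → Net → Net         -- P α̂ →† x̂ Q
  deriving DecidableEq

/-- Free sockets of a net. -/
def fs : Net → Finset ℕ
  | .cap x _ => {x}
  | .exp x P _ _ => fs P \ {x}
  | .imp P _ y x Q => fs P ∪ {y} ∪ (fs Q \ {x})
  | .cut P _ x Q => fs P ∪ (fs Q \ {x})
  | .cutL P _ x Q => fs P ∪ (fs Q \ {x})
  | .cutR P _ x Q => fs P ∪ (fs Q \ {x})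

/-- Free plugs of a net. -/
def fp : Net → Finset ℕ
  | .cap _ a => {a}
  | .exp _ P a b => (fp P \ {a}) ∪ {b}
  | .imp P a _ _ Q => (fp P \ {a}) ∪ fp Q
  | .cut P a _ Q => (fp P \ {a}) ∪ fp Q
  | .cutL P a _ Q => (fp P \ {a}) ∪ fp Q
  | .cutR P a _ Q => (fp P \ {a}) ∪ fp Q

/-- `P` introduces the socket `x`. -/
def IntroS : Net → ℕ → Prop
  | .cap y _, x => y = x
  | .imp Q _ y _ R, x => y = x ∧ x ∉ fs Q ∪ fs R
  | _, _ => False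

/-- `P` introduces the plug `α`. -/
def IntroP : Net → ℕ → Prop
  | .cap _ b, a => b = a
  | .exp _ Q _ c, a => c = a ∧ a ∉ fp Q
  | _, _ => False

/-- Rename every free occurrence of the plug `d` in `P` to `a`  (P[a/d]). -/
def renP : Net → ℕ → ℕ → Net
  | .cap x b, d, a => .cap x (if b = d then a else b)
  | .exp x P b c, d, a => .exp x (if b = d then P else renP P d a) b (if c = d then a else c)
  | .imp P b y x Q, d, a => .imp (if b = d then P else renP P d a) b y x (renP Q d a)
  | .cut P b x Q, d, a => .cut (if b = d then P else renP P d a) b x (renP Q d a)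
  | .cutL P b x Q, d, a => .cutL (if b = d then P else renP P d a) b x (renP Q d a)
  | .cutR P b x Q, d, a => .cutR (if b = d then P else renP P d a) b x (renP Q d a)

/-- Rename every free occurrence of the socket `x` in `P` to `z`  (P[z/x]). -/
def renS : Net → ℕ → ℕ → Net
  | .cap y b, x, z => .cap (if y = x then z else y) b
  | .exp y P b c, x, z => .exp y (if y = x then P else renS P x z) b c
  | .imp P b y w Q, x, z =>
      .imp (renS P x z) b (if y = x then z else y) w (if w = x then Q else renS Q x z)
  | .cut P b w Q, x, z => .cut (renS P x z) b w (if w = x then Q else renS Q x z)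
  | .cutL P b w Q, x, z => .cutL (renS P x z) b w (if w = x then Q else renS Q x z)
  | .cutR P b w Q, x, z => .cutR (renS P x z) b w (if w = x then Q else renS Q x z)

/-- One-step reduction of X (compatible closure of the rules). -/
inductive StepX : Net → Net → Prop
  -- logical rules (α introduced on the left, x introduced on the right)
  | cap_cap (y a x b : ℕ) :
      StepX (.cut (.cap y a) a x (.cap x b)) (.cap y b)
  | exp_cap (y : ℕ) (P : Net) (b a x c : ℕ) (h : a ∉ fp P) :
      StepX (.cut (.exp y P b a) a x (.cap x c)) (.exp y P b c)
  | cap_imp (y a x : ℕ) (Q : Net) (b z : ℕ) (R : Net) (h : x ∉ fs Q ∪ fs R) :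
      StepX (.cut (.cap y a) a x (.imp Q b x z R)) (.imp Q b y z R)
  | exp_imp₁ (y : ℕ) (P : Net) (b a x : ℕ) (Q : Net) (c z : ℕ) (R : Net)
      (h1 : a ∉ fp P) (h2 : x ∉ fs Q ∪ fs R) :
      StepX (.cut (.exp y P b a) a x (.imp Q c x z R)) (.cut Q c y (.cut P b z R))
  | exp_imp₂ (y : ℕ) (P : Net) (b a x : ℕ) (Q : Net) (c z : ℕ) (R : Net)
      (h1 : a ∉ fp P) (h2 : x ∉ fs Q ∪ fs R) :
      StepX (.cut (.exp y P b a) a x (.imp Q c x z R)) (.cut (.cut Q c y P) b z R)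
  -- activation
  | actL (P : Net) (a x : ℕ) (Q : Net) (h : ¬ IntroP P a) :
      StepX (.cut P a x Q) (.cutL P a x Q)
  | actR (P : Net) (a x : ℕ) (Q : Net) (h : ¬ IntroS Q x) :
      StepX (.cut P a x Q) (.cutR P a x Q)
  -- left propagation
  | dL (y a x : ℕ) (P : Net) :
      StepX (.cutL (.cap y a) a x P) (.cut (.cap y a) a x P)
  | capL (y b a x : ℕ) (P : Net) (h : b ≠ a) :
      StepX (.cutL (.cap y b) a x P) (.cap y b)
  | exp_outsL (y : ℕ) (Q : Net) (b a x : ℕ) (P : Net) (c : ℕ)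
      (h : c ∉ fp Q ∪ fp P ∧ c ≠ a ∧ c ≠ b) :
      StepX (.cutL (.exp y Q b a) a x P) (.cut (.exp y (.cutL Q a x P) b c) c x P)
  | exp_insL (y : ℕ) (Q : Net) (b c a x : ℕ) (P : Net) (h : c ≠ a) :
      StepX (.cutL (.exp y Q b c) a x P) (.exp y (.cutL Q a x P) b c)
  | impL (Q : Net) (b z y a x : ℕ) (R P : Net) :
      StepX (.cutL (.imp Q b z y R) a x P) (.imp (.cutL Q a x P) b z y (.cutL R a x P))
  | cut_cutL (Q : Net) (b y a x : ℕ) (R P : Net) :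
      StepX (.cutL (.cut Q b y R) a x P) (.cut (.cutL Q a x P) b y (.cutL R a x P))
  -- right propagation
  | dR (P : Net) (a x b : ℕ) :
      StepX (.cutR P a x (.cap x b)) (.cut P a x (.cap x b))
  | capR (P : Net) (a x y b : ℕ) (h : y ≠ x) :
      StepX (.cutR P a x (.cap y b)) (.cap y b)
  | expR (P : Net) (a x y : ℕ) (Q : Net) (b c : ℕ) :
      StepX (.cutR P a x (.exp y Q b c)) (.exp y (.cutR P a x Q) b c)
  | imp_outsR (P : Net) (a x : ℕ) (Q : Net) (b y : ℕ) (R : Net) (z : ℕ)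
      (h : z ∉ fs P ∪ fs Q ∪ fs R ∧ z ≠ x ∧ z ≠ y) :
      StepX (.cutR P a x (.imp Q b x y R))
            (.cut P a z (.imp (.cutR P a x Q) b z y (.cutR P a x R)))
  | imp_insR (P : Net) (a x : ℕ) (Q : Net) (b z y : ℕ) (R : Net) (h : z ≠ x) :
      StepX (.cutR P a x (.imp Q b z y R)) (.imp (.cutR P a x Q) b z y (.cutR P a x R))
  | cut_cutR (P : Net) (a x : ℕ) (Q : Net) (b y : ℕ) (R : Net) :
      StepX (.cutR P a x (.cut Q b y R)) (.cut (.cutR P a x Q) b y (.cutR P a x R))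
  -- compatibility (closure under contexts)
  | expC (x : ℕ) {P P' : Net} (a b : ℕ) (h : StepX P P') : StepX (.exp x P a b) (.exp x P' a b)
  | impC₁ {P P' : Net} (a y x : ℕ) (Q : Net) (h : StepX P P') :
      StepX (.imp P a y x Q) (.imp P' a y x Q)
  | impC₂ (P : Net) (a y x : ℕ) {Q Q' : Net} (h : StepX Q Q') :
      StepX (.imp P a y x Q) (.imp P a y x Q')
  | cutC₁ {P P' : Net} (a x : ℕ) (Q : Net) (h : StepX P P') :
      StepX (.cut P a x Q) (.cut P' a x Q)
  | cutC₂ (P : Net) (a x : ℕ) {Q Q' : Net} (h : StepX Q Q') :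
      StepX (.cut P a x Q) (.cut P a x Q')
  | cutLC₁ {P P' : Net} (a x : ℕ) (Q : Net) (h : StepX P P') :
      StepX (.cutL P a x Q) (.cutL P' a x Q)
  | cutLC₂ (P : Net) (a x : ℕ) {Q Q' : Net} (h : StepX Q Q') :
      StepX (.cutL P a x Q) (.cutL P a x Q')
  | cutRC₁ {P P' : Net} (a x : ℕ) (Q : Net) (h : StepX P P') :
      StepX (.cutR P a x Q) (.cutR P' a x Q)
  | cutRC₂ (P : Net) (a x : ℕ) {Q Q' : Net} (h : StepX Q Q') :
      StepX (.cutR P a x Q) (.cutR P a x Q')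

/-- Multistep reduction of X: reflexive, transitive (and compatible) closure. -/
def RedX : Net → Net → Prop := Relation.ReflTransGen StepX

/-- Type assignment for X:  P ··· Γ ⊢ Δ  (Γ a context of sockets, Δ of plugs). -/
inductive TypesX : Net → (ℕ → Option Ty) → (ℕ → Option Ty) → Prop
  | cap (Γ Δ : ℕ → Option Ty) (y a : ℕ) (A : Ty) :
      TypesX (.cap y a) (upd Γ y A) (upd Δ a A)
  | exp {P : Net} {Γ Δ : ℕ → Option Ty} {x a : ℕ} {A B : Ty} (b : ℕ)
      (h : TypesX P (upd Γ x A) (upd Δ a B)) :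
      TypesX (.exp x P a b) Γ (upd Δ b (Ty.arrow A B))
  | imp {P Q : Net} {Γ Δ : ℕ → Option Ty} {a x : ℕ} {A B : Ty} (y : ℕ)
      (h1 : TypesX P Γ (upd Δ a A)) (h2 : TypesX Q (upd Γ x B) Δ) :
      TypesX (.imp P a y x Q) (upd Γ y (Ty.arrow A B)) Δ
  | cut {P Q : Net} {Γ Δ : ℕ → Option Ty} {a x : ℕ} {A : Ty}
      (h1 : TypesX P Γ (upd Δ a A)) (h2 : TypesX Q (upd Γ x A) Δ) :
      TypesX (.cut P a x Q) Γ Δ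
  | cutL {P Q : Net} {Γ Δ : ℕ → Option Ty} {a x : ℕ} {A : Ty}
      (h1 : TypesX P Γ (upd Δ a A)) (h2 : TypesX Q (upd Γ x A) Δ) :
      TypesX (.cutL P a x Q) Γ Δ
  | cutR {P Q : Net} {Γ Δ : ℕ → Option Ty} {a x : ℕ} {A : Ty}
      (h1 : TypesX P Γ (upd Δ a A)) (h2 : TypesX Q (upd Γ x A) Δ) :
      TypesX (.cutR P a x Q) Γ Δ

/-! ## The asynchronous π-calculus with pairing and non-blocking input -/

/-- π-names: the sockets and plugs of X, plus internal variables. -/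
inductive PName : Type
  | sock : ℕ → PName
  | plug : ℕ → PName
  | var : ℕ → PName
  deriving DecidableEq

/-- Data: a name or a pair of names (pairing is not recursive). -/
inductive PData : Type
  | name : PName → PData
  | pair : PName → PName → PData
  deriving DecidableEq

inductive Proc : Type
  | nil : Proc
  | par : Proc → Proc → Proc
  | repl : Proc → Proc
  | nu : PName → Proc → Proc
  | inp : PName → PName → Proc → Proc          -- a(x).P
  | out : PName → PData → Proc                 -- a⟨p⟩ (asynchronous)
  | letp : PName → PName → PData → Proc → Proc -- let ⟨x,y⟩ = d in P
  deriving DecidableEq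

def fnD : PData → Finset PName
  | .name a => {a}
  | .pair a b => {a, b}

/-- Free names of a process. -/
def fn : Proc → Finset PName
  | .nil => ∅
  | .par P Q => fn P ∪ fn Q
  | .repl P => fn P
  | .nu a P => fn P \ {a}
  | .inp a x P => {a} ∪ (fn P \ {x})
  | .out a p => {a} ∪ fnD p
  | .letp x y d P => fnD d ∪ (fn P \ {x, y})

/-- Substitute datum `p` for name `x` in a name position. -/
def applyN (x : PName) (p : PData) (n : PName) : PName :=
  if n = x then (match p with | .name b => b | .pair _ _ => n) else n

/-- Substitute datum `p` for name `x` in a datum. -/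
def applyD (x : PName) (p : PData) : PData → PData
  | .name n => if n = x then p else .name n
  | .pair a b => .pair (applyN x p a) (applyN x p b)

/-- Substitution of a datum for a free name in a process:  P[p/x]. -/
def psubst : Proc → PName → PData → Proc
  | .nil, _, _ => .nil
  | .par P Q, x, p => .par (psubst P x p) (psubst Q x p)
  | .repl P, x, p => .repl (psubst P x p)
  | .nu a P, x, p => if a = x then .nu a P else .nu a (psubst P x p)
  | .inp a y P, x, p => .inp (applyN x p a) y (if y = x then P else psubst P x p)
  | .out a q, x, p => .out (applyN x p a) (applyD x p q)
  | .letp u v d P, x, p => .letp u v (applyD x p d) (if u = x ∨ v = x then P else psubst P x p)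

/-- Structural congruence. -/
inductive Cong : Proc → Proc → Prop
  | parNil (P : Proc) : Cong (.par P .nil) P
  | parComm (P Q : Proc) : Cong (.par P Q) (.par Q P)
  | parAssoc (P Q R : Proc) : Cong (.par (.par P Q) R) (.par P (.par Q R))
  | nuNil (n : PName) : Cong (.nu n .nil) .nil
  | nuComm (m n : PName) (P : Proc) : Cong (.nu m (.nu n P)) (.nu n (.nu m P))
  | nuPar (n : PName) (P Q : Proc) (h : n ∉ fn P) : Cong (.nu n (.par P Q)) (.par P (.nu n Q))
  | replUnfold (P : Proc) : Cong (.repl P) (.par P (.repl P))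
  | letPair (x y a b : PName) (R : Proc) :
      Cong (.letp x y (.pair a b) R) (psubst (psubst R x (.name a)) y (.name b))
  | refl (P : Proc) : Cong P P
  | symm {P Q : Proc} : Cong P Q → Cong Q P
  | trans {P Q R : Proc} : Cong P Q → Cong Q R → Cong P R
  | parC₁ {P P' : Proc} (Q : Proc) : Cong P P' → Cong (.par P Q) (.par P' Q)
  | parC₂ (P : Proc) {Q Q' : Proc} : Cong Q Q' → Cong (.par P Q) (.par P Q')
  | replC {P P' : Proc} : Cong P P' → Cong (.repl P) (.repl P')
  | nuC (n : PName) {P P' : Proc} : Cong P P' → Cong (.nu n P) (.nu n P')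
  | inpC (a x : PName) {P P' : Proc} : Cong P P' → Cong (.inp a x P) (.inp a x P')
  | letC (x y : PName) (d : PData) {P P' : Proc} :
      Cong P P' → Cong (.letp x y d P) (.letp x y d P')

/-- One-step reduction of π (with non-blocking input). -/
inductive StepPi : Proc → Proc → Prop
  | comm (a : PName) (p : PData) (x : PName) (Q : Proc) :
      StepPi (.par (.out a p) (.inp a x Q)) (psubst Q x p)
  | nu (n : PName) {P P' : Proc} : StepPi P P' → StepPi (.nu n P) (.nu n P')
  | parL {P P' : Proc} (Q : Proc) : StepPi P P' → StepPi (.par P Q) (.par P' Q)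
  | inp (n x : PName) {P Q : Proc} : StepPi P Q → StepPi (.inp n x P) (.inp n x Q)
  | congr {P P' Q Q' : Proc} : Cong P P' → StepPi P' Q' → Cong Q' Q → StepPi P Q

/-- →π+ : the reflexive transitive closure of one-step π reduction. -/
def RedPi : Proc → Proc → Prop := Relation.ReflTransGen StepPi

def nuList : List PName → Proc → Proc
  | [], P => P
  | b :: bs, P => .nu b (nuList bs P)

/-- P↓n : P exhibits a barb on n. -/
def Barb (P : Proc) (n : PName) : Prop :=
  ∃ (bs : List PName) (p : PData) (Q : Proc), n ∉ bs ∧ Cong P (nuList bs (.par (.out n p) Q))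

/-- P⇓n : P weakly exhibits a barb on n. -/
def WeakBarb (P : Proc) (n : PName) : Prop := ∃ P', RedPi P P' ∧ Barb P' n

/-- Process contexts. -/
inductive PCtxt : Type
  | hole : PCtxt
  | parL : PCtxt → Proc → PCtxt
  | parR : Proc → PCtxt → PCtxt
  | repl : PCtxt → PCtxt
  | nu : PName → PCtxt → PCtxt
  | inp : PName → PName → PCtxt → PCtxt
  | letp : PName → PName → PData → PCtxt → PCtxt

def fill : PCtxt → Proc → Proc
  | .hole, P => P
  | .parL C Q, P => .par (fill C P) Q
  | .parR Q C, P => .par Q (fill C P)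
  | .repl C, P => .repl (fill C P)
  | .nu n C, P => .nu n (fill C P)
  | .inp a x C, P => .inp a x (fill C P)
  | .letp x y d C, P => .letp x y d (fill C P)

/-- R is a barbed contextual simulation. -/
def IsSim (R : Proc → Proc → Prop) : Prop :=
  ∀ P Q, R P Q →
    (∀ n, Barb P n → WeakBarb Q n) ∧
    (∀ C P', StepPi (fill C P) P' → ∃ Q', RedPi (fill C Q) Q' ∧ R P' Q')

/-- P ≾ Q : barbed contextual simulation (largest simulation). -/
def BarbedSim (P Q : Proc) : Prop := ∃ R, IsSim R ∧ R P Q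

/-- Type assignment for π:  P : Γ ⊢π Δ. -/
inductive TypesPi : Proc → (PName → Option Ty) → (PName → Option Ty) → Prop
  | nil (Γ Δ : PName → Option Ty) : TypesPi .nil Γ Δ
  | repl {P : Proc} {Γ Δ : PName → Option Ty} : TypesPi P Γ Δ → TypesPi (.repl P) Γ Δ
  | nu {P : Proc} {Γ Δ : PName → Option Ty} {a : PName} {A : Ty} :
      TypesPi P (upd Γ a A) (upd Δ a A) → TypesPi (.nu a P) Γ Δ
  | par {P Q : Proc} {Γ Δ : PName → Option Ty} :
      TypesPi P Γ Δ → TypesPi Q Γ Δ → TypesPi (.par P Q) Γ Δ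
  | inp {P : Proc} {Γ Δ : PName → Option Ty} {x : PName} {A : Ty} (a : PName)
      (h : TypesPi P (upd Γ x A) (upd Δ x A)) : TypesPi (.inp a x P) (upd Γ a A) Δ
  | out (Γ Δ : PName → Option Ty) (a b : PName) (A : Ty) :
      TypesPi (.out a (.name b)) (upd Γ b A) (upd (upd Δ b A) a A)
  | pairOut (Γ Δ : PName → Option Ty) (a b c : PName) (A B : Ty) :
      TypesPi (.out a (.pair b c)) (upd Γ b A) (upd (upd Δ c B) a (Ty.arrow A B))
  | letp {P : Proc} {Γ Δ : PName → Option Ty} {x y : PName} {A B : Ty} (z : PName)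
      (h : TypesPi P (upd Γ y B) (upd Δ x A)) :
      TypesPi (.letp x y (.name z) P) (upd Γ z (Ty.arrow A B)) Δ

/-! ## The encoding of X into π -/

/-- Forwarder a=b := a(o).b⟨o⟩. -/
def fwd (a b : PName) : Proc := .inp a (.var 0) (.out b (.name (.var 0)))

/-- ⟦P α̂†x̂Q⟧ = (να)(⟦P⟧ | !(νx)(α=x | ⟦Q⟧)) | (νx)(!(να)(⟦P⟧ | α=x) | ⟦Q⟧). -/
def encCut (p : Proc) (a x : ℕ) (q : Proc) : Proc :=
  .par (.nu (.plug a) (.par p (.repl (.nu (.sock x) (.par (fwd (.plug a) (.sock x)) q)))))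
       (.nu (.sock x) (.par (.repl (.nu (.plug a) (.par p (fwd (.plug a) (.sock x))))) q))

/-- The encoding ⟦·⟧ of X-nets into π-processes. -/
def encX : Net → Proc
  | .cap x a => fwd (.sock x) (.plug a)
  | .exp y Q b a =>
      .nu (.sock y) (.nu (.plug b)
        (.par (encX Q) (.out (.plug a) (.pair (.sock y) (.plug b)))))
  | .imp P a y x Q =>
      .inp (.sock y) (.var 0) (.letp (.var 1) (.var 2) (.name (.var 0))
        (.par (.nu (.plug a) (.repl (.par (encX P) (fwd (.plug a) (.var 1)))))
              (.nu (.sock x) (.repl (.par (fwd (.var 2) (.sock x)) (encX Q))))))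
  | .cut P a x Q => encCut (encX P) a x (encX Q)
  | .cutL P a x Q => encCut (encX P) a x (encX Q)
  | .cutR P a x Q => encCut (encX P) a x (encX Q)

/-- View an X socket-context as a π context. -/
def sockCtx (Γ : ℕ → Option Ty) : PName → Option Ty
  | .sock n => Γ n
  | _ => none

/-- View an X plug-context as a π context. -/
def plugCtx (Δ : ℕ → Option Ty) : PName → Option Ty
  | .plug n => Δ n
  | _ => none

/-! ## The λ-calculus -/

inductive Lam : Type
  | var : ℕ → Lam
  | abs : ℕ → Lam → Lam
  | app : Lam → Lam → Lam
  deriving DecidableEq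

/-- Substitution M[N/x]. -/
def lsubst : Lam → ℕ → Lam → Lam
  | .var y, x, N => if y = x then N else .var y
  | .abs y M, x, N => if y = x then .abs y M else .abs y (lsubst M x N)
  | .app M₁ M₂, x, N => .app (lsubst M₁ x N) (lsubst M₂ x N)

/-- One-step β-reduction. -/
inductive Beta : Lam → Lam → Prop
  | beta (x : ℕ) (M N : Lam) : Beta (.app (.abs x M) N) (lsubst M x N)
  | appL {M M' : Lam} (N : Lam) : Beta M M' → Beta (.app M N) (.app M' N)
  | appR (M : Lam) {N N' : Lam} : Beta N N' → Beta (.app M N) (.app M N')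
  | abs (x : ℕ) {M M' : Lam} : Beta M M' → Beta (.abs x M) (.abs x M')

/-- Simple type assignment for λ. -/
inductive TypesLam : (ℕ → Option Ty) → Lam → Ty → Prop
  | var {Γ : ℕ → Option Ty} {x : ℕ} {A : Ty} : Γ x = some A → TypesLam Γ (.var x) A
  | abs {Γ : ℕ → Option Ty} {x : ℕ} {M : Lam} {A B : Ty} :
      TypesLam (upd Γ x A) M B → TypesLam Γ (.abs x M) (Ty.arrow A B)
  | app {Γ : ℕ → Option Ty} {M N : Lam} {A B : Ty} :
      TypesLam Γ M (Ty.arrow A B) → TypesLam Γ N A → TypesLam Γ (.app M N) B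

/-- Interpretation of λ into X, with a supply `n` of fresh connectors:
all connectors generated are ≥ n.  ⟦x⟧α = ⟨x·α⟩; ⟦λx.M⟧α = (x̂ ⟦M⟧β β̂)·α (β fresh);
⟦MN⟧α = ⟦M⟧γ γ̂ † x̂ (⟦N⟧β β̂ [x] ŷ ⟨y·α⟩) (γ,β,x,y fresh). -/
def encLamAux : Lam → ℕ → ℕ → Net × ℕ
  | .var x, a, n => (.cap x a, n)
  | .abs x M, a, n =>
      let r := encLamAux M n (n + 1)
      (.exp x r.1 n a, r.2)
  | .app M N, a, n =>
      let r := encLamAux M n (n + 2)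
      let s := encLamAux N (n + 1) r.2
      (.cut r.1 n n (.imp s.1 (n + 1) n (n + 1) (.cap (n + 1) a)), s.2)

/-- A bound above all variables occurring in a λ-term. -/
def lamFresh : Lam → ℕ
  | .var x => x + 1
  | .abs x M => max (x + 1) (lamFresh M)
  | .app M N => max (lamFresh M) (lamFresh N)

/-- ⟦M⟧α : the interpretation of λ into X (fresh names chosen above all of M and α). -/
def encLam (M : Lam) (a : ℕ) : Net := (encLamAux M a (max (lamFresh M) (a + 1))).1

/-- ⟦M⟧πα = ⟦⟦M⟧α⟧ : the interpretation of λ into π via X. -/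
def encLamPi (M : Lam) (a : ℕ) : Proc := encX (encLam M a)

theorem upd_self_eq {α : Type} [DecidableEq α] (Γ : α → Option Ty) (n : α) (A : Ty)
    (h : Γ n = some A) : upd Γ n A = Γ := by
  funext m
  unfold upd
  split
  · next e => rw [e, h]
  · rfl

theorem TypesPi.inp' {P : Proc} {Γ Δ : PName → Option Ty} {x a : PName} {A : Ty}
    (ha : Γ a = some A) (h : TypesPi P (upd Γ x A) (upd Δ x A)) : TypesPi (.inp a x P) Γ Δ := by
  have := TypesPi.inp a h
  rwa [upd_self_eq Γ a A ha] at this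

theorem TypesPi.out' {Γ Δ : PName → Option Ty} {a b : PName} {A : Ty}
    (h1 : Γ b = some A) (h2 : Δ b = some A) (h3 : Δ a = some A) :
    TypesPi (.out a (.name b)) Γ Δ := by
  have := TypesPi.out Γ Δ a b A
  rwa [upd_self_eq Γ b A h1, upd_self_eq Δ b A h2, upd_self_eq Δ a A h3] at this

theorem TypesPi.pairOut' {Γ Δ : PName → Option Ty} {a b c : PName} {A B : Ty}
    (h1 : Γ b = some A) (h2 : Δ c = some B) (h3 : Δ a = some (Ty.arrow A B)) :
    TypesPi (.out a (.pair b c)) Γ Δ := by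
  have := TypesPi.pairOut Γ Δ a b c A B
  rwa [upd_self_eq Γ b A h1, upd_self_eq Δ c B h2, upd_self_eq Δ a _ h3] at this

theorem TypesPi.letp' {P : Proc} {Γ Δ : PName → Option Ty} {x y z : PName} {A B : Ty}
    (hz : Γ z = some (Ty.arrow A B)) (h : TypesPi P (upd Γ y B) (upd Δ x A)) :
    TypesPi (.letp x y (.name z) P) Γ Δ := by
  have := TypesPi.letp z h
  rwa [upd_self_eq Γ z _ hz] at this

theorem fwd_types {Γ Δ : PName → Option Ty} {a b : PName} {A : Ty}
    (h1 : Γ a = some A) (h2 : Δ b = some A) (hb : b ≠ .var 0) : TypesPi (fwd a b) Γ Δ := by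
  refine TypesPi.inp' h1 (TypesPi.out' (A := A) ?_ ?_ ?_) <;> simp [upd, hb, h2]

theorem encCut_types {p q : Proc} {a x : ℕ} {Γ Δ : PName → Option Ty} (A : Ty)
    (hp : ∀ Γ' Δ' : PName → Option Ty, (∀ m, m ≠ x → Γ' (.sock m) = Γ (.sock m)) →
      Δ' (.plug a) = some A → TypesPi p Γ' Δ')
    (hq : ∀ Γ' Δ' : PName → Option Ty, (∀ m, m ≠ x → Γ' (.sock m) = Γ (.sock m)) →
      Γ' (.sock x) = some A →
      (∀ m, m ≠ a → Δ' (.plug m) = Δ (.plug m)) → TypesPi q Γ' Δ') :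
    TypesPi (encCut p a x q) Γ Δ := by
  refine .par (.nu (A := A) (.par ?_ (.repl (.nu (A := A) (.par ?_ ?_)))))
    (.nu (A := A) (.par (.repl (.nu (A := A) (.par ?_ ?_))) ?_))
  · apply hp <;> simp [upd]
  · apply fwd_types (A := A) <;> simp [upd]
  · apply hq <;> simp +contextual [upd]
  · apply hp <;> simp +contextual [upd]
  · apply fwd_types (A := A) <;> simp [upd]
  · apply hq <;> simp +contextual [upd]

theorem le_encLamAux (M : Lam) : ∀ a n, n ≤ (encLamAux M a n).2 := by
  induction M with
  | var x => intro a n; exact le_rfl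
  | abs x M ih =>
    intro a n
    have := ih n (n + 1)
    simp only [encLamAux]
    omega
  | app M N ihM ihN =>
    intro a n
    have h1 := ihM n (n + 2)
    have h2 := ihN (n + 1) (encLamAux M n (n + 2)).2
    simp only [encLamAux]
    omega

theorem encLamAux_types {Γ : ℕ → Option Ty} {M : Lam} {A : Ty} (h : TypesLam Γ M A) :
    ∀ (a n : ℕ) (G D : PName → Option Ty), a < n → lamFresh M ≤ n →
      (∀ x, x < lamFresh M → G (.sock x) = Γ x) → D (.plug a) = some A →
      TypesPi (encX (encLamAux M a n).1) G D := by
  induction h with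
  | @var Γ x A h =>
    intro a n G D _ _ hG hD
    refine fwd_types (A := A) ?_ hD (by simp)
    rw [hG x (by simp [lamFresh]), h]
  | @abs Γ x M A B h ih =>
    intro a n G D han hM hG hD
    simp only [lamFresh] at hM hG
    refine .nu (A := A) (.nu (A := B) (.par (ih _ _ _ _ ?_ ?_ ?_ ?_)
      (TypesPi.pairOut' (A := A) (B := B) ?_ ?_ ?_)))
    · omega
    · omega
    · intro y hy
      by_cases e : y = x
      · simp [upd, e]
      · simp [upd, e, hG y (by omega)]
    · simp [upd]
    · simp [upd]
    · simp [upd]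
    · simp [upd, hD, han.ne]
  | @app Γ M N A B hM hN ihM ihN =>
    intro a n G D han hfr hG hD
    simp only [lamFresh] at hfr hG
    have hle := le_encLamAux M n (n + 2)
    refine encCut_types (Ty.arrow A B) ?_ ?_
    · intro G' D' hG' hD'
      refine ihM _ _ _ _ (by omega) (by omega) ?_ hD'
      intro y hy
      rw [hG' y (by omega), hG y (by omega)]
    · intro G' D' hG' hx hD'
      have hDa : D' (.plug a) = some B := by rw [hD' a han.ne, hD]
      refine TypesPi.inp' hx (TypesPi.letp' (A := A) (B := B) (by simp [upd])
        (.par (.nu (A := A) (.repl (.par (ihN _ _ _ _ ?_ ?_ ?_ ?_) (fwd_types (A := A) ?_ ?_ ?_))))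
          (.nu (A := B) (.repl (.par (fwd_types (A := B) ?_ ?_ ?_) (fwd_types (A := B) ?_ ?_ ?_))))))
      · omega
      · omega
      · intro y hy
        simp [upd, hG' y (by omega), hG y (by omega)]
      all_goals simp [upd, hDa]

/-- Simulation of the λ-calculus in π (types). -/
theorem lam_types (Γ : ℕ → Option Ty) (M : Lam) (A : Ty) (h : TypesLam Γ M A) (a : ℕ) :
    TypesPi (encLamPi M a) (sockCtx Γ) (plugCtx (upd emptyCtx a A)) := by
  refine encLamAux_types h _ _ _ _ (by omega) (by omega) (fun _ _ => rfl) ?_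
  simp [plugCtx, upd]
end

section
/- The π-encoding of the X-witness of Peirce's law is typeable: for all types A and B, letting P₀ = (ẑ (((ŷ ⟨y·δ⟩ η̂)·α) α̂ [z] ŵ ⟨w·δ⟩) δ̂)·γ, the process ⟦P₀⟧ satisfies ⟦P₀⟧ : ∅ ⊢π γ:((A⇒B)⇒A)⇒A. -/
theorem upd_same {Γ : PName → Option Ty} {n : PName} {A : Ty} (h : Γ n = some A) :
    upd Γ n A = Γ := by
  funext m
  unfold upd
  split
  · next e => rw [e, h]
  · rfl

theorem tInp {P : Proc} {Γ Δ : PName → Option Ty} {a x : PName} (A : Ty) (ha : Γ a = some A)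
    (h : TypesPi P (upd Γ x A) (upd Δ x A)) : TypesPi (.inp a x P) Γ Δ := by
  have := TypesPi.inp a h
  rwa [upd_same ha] at this

theorem tOut {Γ Δ : PName → Option Ty} {a b : PName} (A : Ty) (h1 : Γ b = some A)
    (h2 : Δ b = some A) (h3 : Δ a = some A) : TypesPi (.out a (.name b)) Γ Δ := by
  have := TypesPi.out Γ Δ a b A
  rwa [upd_same h1, upd_same h2, upd_same h3] at this

theorem tPair {Γ Δ : PName → Option Ty} {a b c : PName} (A B : Ty) (h1 : Γ b = some A)
    (h2 : Δ c = some B) (h3 : Δ a = some (Ty.arrow A B)) :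
    TypesPi (.out a (.pair b c)) Γ Δ := by
  have := TypesPi.pairOut Γ Δ a b c A B
  rwa [upd_same h1, upd_same h2, upd_same h3] at this

theorem tLet {P : Proc} {Γ Δ : PName → Option Ty} {x y z : PName} (A B : Ty)
    (hz : Γ z = some (Ty.arrow A B)) (h : TypesPi P (upd Γ y B) (upd Δ x A)) :
    TypesPi (.letp x y (.name z) P) Γ Δ := by
  have := TypesPi.letp z h
  rwa [upd_same hz] at this

theorem tFwd {Γ Δ : PName → Option Ty} {a b : PName} (A : Ty) (h1 : Γ a = some A)
    (h2 : Δ b = some A) : TypesPi (fwd a b) Γ Δ := by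
  refine tInp A h1 (tOut A ?_ ?_ ?_)
  · simp [upd]
  · simp [upd]
  · unfold upd
    split
    · rfl
    · exact h2

/-- The π-encoding of the X-witness of Peirce's law is typeable
    (sockets: z=0, y=1, w=2; plugs: δ=0, η=1, α=2, γ=3). -/
theorem peirce_pi (A B : Ty) :
    TypesPi (encX (Net.exp 0 (Net.imp (Net.exp 1 (Net.cap 1 0) 1 2) 2 0 2 (Net.cap 2 0)) 0 3))
      emptyCtx
      (upd emptyCtx (PName.plug 3) (Ty.arrow (Ty.arrow (Ty.arrow A B) A) A)) := by
  simp only [encX]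
  refine .nu (A := .arrow (.arrow A B) A) (.nu (A := A) (.par ?_ ?_))
  · refine tInp (.arrow (.arrow A B) A) rfl (tLet (.arrow A B) A rfl (.par ?_ ?_))
    · refine .nu (A := .arrow A B) (.repl (.par ?_ (tFwd (.arrow A B) rfl rfl)))
      exact .nu (A := A) (.nu (A := B) (.par (tFwd A rfl rfl) (tPair A B rfl rfl rfl)))
    · exact .nu (A := A) (.repl (.par (tFwd A rfl rfl) (tFwd A rfl rfl)))
  · exact tPair (.arrow (.arrow A B) A) A rfl rfl rfl
end
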